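/- Let α, β, λ ∈ ℂ with α ≠ 0 and λ² − λ + αβ = 0. Then for every f ∈ ker a, the vector ψ := b f + (α⁻¹(1 − λ)) • f satisfies (b ∘ a + α • (b ∘ (b ∘ a) − b) + β • a) ψ = λ • ψ; in other words, ψ is an eigenvector of the modified Landau operator Δ̃₂ = b∘a + α·b∘(b∘a − id) + β·a with eigenvalue λ = (1 ± √(1 − 4αβ))/2. -/

import Mathlib

/-- Let `V` be a complex vector space and `a, b : V → V` be `ℂ`-linear maps with
`a ∘ b − b ∘ a = id`. Let `α, β, λ ∈ ℂ` with `α ≠ 0` and `λ² − λ + αβ = 0`. Then for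
`f ∈ ker a`, the vector `ψ = b f + (α⁻¹(1 − λ)) • f` satisfies
`(b∘a + α•(b∘(b∘a) − b) + β•a) ψ = λ • ψ`; i.e. `ψ` is an eigenvector of the modified
Landau operator `Δ̃₂ = b∘a + α·b∘(b∘a − id) + β·a` with eigenvalue
`λ = (1 ± √(1 − 4αβ))/2`. -/
theorem modified_landau_eigenvector
    {V : Type*} [AddCommGroup V] [Module ℂ V]
    (a b : Module.End ℂ V) (hab : a * b - b * a = 1)
    (α β lam : ℂ) (hα : α ≠ 0) (hlam : lam ^ 2 - lam + α * β = 0)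
    (f : V) (hf : a f = 0)
    (ψ : V) (hψ : ψ = b f + (α⁻¹ * (1 - lam)) • f) :
    (b * a + α • (b * (b * a) - b) + β • a) ψ = lam • ψ := by
  have hb : a (b f) = f := by
    have h := congrArg (fun T : Module.End ℂ V => T f) hab
    simpa [hf] using h
  have ha : a ψ = f := by
    rw [hψ, map_add, map_smul, hb, hf, smul_zero, add_zero]
  have hβ : β = lam * (α⁻¹ * (1 - lam)) := by
    field_simp
    linear_combination hlam
  have hc : α * (α⁻¹ * (1 - lam)) = 1 - lam := by
    field_simp
  have hbψ : α • b ψ = α • b (b f) + (1 - lam) • b f := by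
    rw [hψ, map_add, map_smul, smul_add, smul_smul, hc]
  simp only [LinearMap.add_apply, LinearMap.smul_apply, LinearMap.sub_apply,
    Module.End.mul_apply, ha, smul_sub, hbψ]
  rw [hψ, hβ]
  module
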